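/- The determinant det(K_B) ∈ F[x_{b,j} : b ∈ B, j ∈ {0,…,s−1}] is a homogeneous polynomial of total degree s·t·(t−1)/2, and the coefficient of the monomial Π_{c=1}^{t} Π_{j=0}^{s−1} x_{b_c,j}^{c−1} in det(K_B) is nonzero; in particular det(K_B) is a nonzero polynomial. -/

import Mathlib

open Matrix MvPolynomial

/-- The `m`-th smallest element of the finite set `B ⊆ ℕ` (junk value `0` if `m ≥ |B|`). -/
def enum (B : Finset ℕ) (m : ℕ) : ℕ := (B.sort (· ≤ ·)).getD m 0

/-- The `z`-th entry of the `(i,j)` block (a length-`t` column vector) of the generic kernel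
matrix `K_b` over `F[x_{b,j}]`: it is `x_{b,j}^z` if `i = j`, `−x_{b,j}^z` if `i = b ≠ j`,
and `0` otherwise. -/
noncomputable def KentPoly (F : Type*) [Field F] (b i j z : ℕ) : MvPolynomial (ℕ × ℕ) F :=
  if i = j then (X (b, j)) ^ z
  else if i = b ∧ i ≠ j then -((X (b, j)) ^ z)
  else 0

/-- The `st × st` matrix `K_B = [K_{b₁} | ⋯ | K_{b_t}]` over the polynomial ring
`F[x_{b,j} : b ∈ B, j ∈ [s]]` (with `t = |B|`): row `ρ` encodes block row `ρ / t` and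
inner row `ρ % t`; column `κ` selects the `κ / s`-th member of `B` and inner column
`κ % s`. -/
noncomputable def KpolyB (F : Type*) [Field F] (s : ℕ) (B : Finset ℕ) :
    Matrix (Fin (s * B.card)) (Fin (s * B.card)) (MvPolynomial (ℕ × ℕ) F) :=
  Matrix.of fun ρ κ =>
    KentPoly F (enum B ((κ : ℕ) / s)) ((ρ : ℕ) / B.card) ((κ : ℕ) % s) ((ρ : ℕ) % B.card)

/-!
Each entry of `K_B` is a monomial `a x ^ z` in which the variable `x` depends only on the column,
with different columns carrying different variables, and the exponent `z` only on the row.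
The row exponents alone give homogeneity. A term of the Leibniz expansion contributes to
`∏ x_{b_c, j} ^ c` exactly when it uses in each column `(c, j)` an entry of exponent `c`, so the
coefficient is the determinant of the scalar matrix obtained by keeping only those entries.
Up to an ordering of its rows and columns, that matrix is block diagonal, and its blocks are
perturbations of the identity of rank at most one, whose determinant is `1` by the matrix
determinant lemma.
-/

section SingleVariableColumns

variable {σ n : Type*} [Fintype n]

lemma isHomogeneous_det_of_rows {R : Type*} [CommRing R] [DecidableEq n]
    {M : Matrix n n (MvPolynomial σ R)} {d : n → ℕ}
    (hM : ∀ p q, (M p q).IsHomogeneous (d p)) : M.det.IsHomogeneous (∑ p, d p) := by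
  rw [det_apply']
  refine IsHomogeneous.sum _ _ _ fun τ _ => ?_
  have hprod : (∏ q, M (τ q) q).IsHomogeneous (∑ p, d p) := by
    rw [← Equiv.sum_comp τ d]
    exact IsHomogeneous.prod _ _ _ fun q _ => hM (τ q) q
  rw [← map_intCast (C : R →+* MvPolynomial σ R)]
  exact hprod.C_mul _

lemma finsupp_sum_single_injective {M : Type*} [AddCommMonoid M] {v : n → σ}
    (hv : Function.Injective v) :
    Function.Injective fun f : n → M => ∑ q, Finsupp.single (v q) (f q) := by
  have hmapDomain (f : n → M) : ∑ q, Finsupp.single (v q) (f q) =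
      (Finsupp.equivFunOnFinite.symm f).mapDomain v := by
    simp [Finsupp.mapDomain, Finsupp.sum_fintype]
  intro f g hfg
  simp only [hmapDomain] at hfg
  exact Finsupp.equivFunOnFinite.symm.injective (Finsupp.mapDomain_injective hv hfg)

lemma coeff_prod_monomial_single {R : Type*} [CommSemiring R] {v : n → σ}
    (hv : Function.Injective v) (e f : n → ℕ) (a : n → R) :
    coeff (∑ q, Finsupp.single (v q) (f q)) (∏ q, monomial (Finsupp.single (v q) (e q)) (a q)) =
      ∏ q, if e q = f q then a q else 0 := by
  classical
  simp only [← monomial_sum_prod, coeff_monomial, (finsupp_sum_single_injective hv).eq_iff,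
    funext_iff, Finset.prod_ite_zero, Finset.mem_univ, forall_const]

theorem coeff_det_monomial_single {R : Type*} [CommRing R] [DecidableEq n] {v : n → σ}
    (hv : Function.Injective v) (e : n → n → ℕ) (f : n → ℕ) (a : n → n → R) :
    coeff (∑ q, Finsupp.single (v q) (f q))
        (of fun p q => monomial (Finsupp.single (v q) (e p q)) (a p q)).det =
      (of fun p q => if e p q = f q then a p q else 0).det := by
  simp only [det_apply, coeff_sum, Units.smul_def, coeff_smul, of_apply,
    coeff_prod_monomial_single hv]

end SingleVariableColumns

/-- The scalar coefficients of the kernel matrix `K_b`: its `(i, j)` block has entries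
`kernelCoeff R s b i j * x_{b,j} ^ z`. Any `b : ℕ` is allowed; for `s ≤ b` this is the identity. -/
def kernelCoeff (R : Type*) [CommRing R] (s b : ℕ) : Matrix (Fin s) (Fin s) R :=
  of fun i j => if i = j then 1 else if (i : ℕ) = b then -1 else 0

theorem det_kernelCoeff (R : Type*) [CommRing R] (s b : ℕ) : (kernelCoeff R s b).det = 1 := by
  let u : Fin s → R := fun i => if (i : ℕ) = b then 1 else 0
  let w : Fin s → R := fun j => if (j : ℕ) = b then 0 else -1
  have hrankOne : kernelCoeff R s b = 1 + replicateCol Unit u * replicateRow Unit w := by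
    ext i j
    simp only [kernelCoeff, of_apply, Matrix.add_apply, one_apply, mul_apply, replicateCol_apply,
      replicateRow_apply, Finset.univ_unique, Finset.sum_singleton, u, w]
    grind
  have horthogonal : w ⬝ᵥ u = 0 := by
    refine Finset.sum_eq_zero fun i _ => ?_
    by_cases hi : (i : ℕ) = b <;> simp [u, w, hi]
  rw [hrankOne, det_one_add_replicateCol_mul_replicateRow, horthogonal, add_zero]

/-- Splits a row index of `K_B` into its block row and its inner row. -/
def rowIndex (s t : ℕ) : Fin (s * t) ≃ Fin s × Fin t :=
  finProdFinEquiv.symm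

/-- Splits a column index `κ` of `K_B` into its inner column `κ % s` and the position `κ / s` in `B`
of the kernel matrix it belongs to. The components are in this order so that they match `rowIndex`,
the block row and inner column both ranging over `Fin s`. -/
def colIndex (s t : ℕ) : Fin (s * t) ≃ Fin s × Fin t :=
  (finCongr (mul_comm s t)).trans (finProdFinEquiv.symm.trans (Equiv.prodComm _ _))

/-- The index of the variable `x_{b,j}` that occurs in a given column of `K_B`. -/
def columnVar (s : ℕ) (B : Finset ℕ) (κ : Fin (s * B.card)) : ℕ × ℕ :=
  (enum B (colIndex s B.card κ).2, (colIndex s B.card κ).1)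

lemma enum_eq_orderEmbOfFin (B : Finset ℕ) (c : Fin B.card) :
    enum B c = B.orderEmbOfFin rfl c := by
  rw [enum, Finset.orderEmbOfFin_apply, List.getD_eq_getElem]
  rfl

lemma columnVar_injective (s : ℕ) (B : Finset ℕ) : Function.Injective (columnVar s B) := by
  intro κ κ' h
  simp only [columnVar, enum_eq_orderEmbOfFin, Prod.mk.injEq, EmbeddingLike.apply_eq_iff_eq,
    Fin.val_inj] at h
  exact (colIndex s B.card).injective (Prod.ext h.2 h.1)

lemma sum_columnVar (s : ℕ) (B : Finset ℕ) :
    ∑ κ, Finsupp.single (columnVar s B κ) ((colIndex s B.card κ).2 : ℕ) =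
      ∑ c ∈ Finset.range B.card, ∑ j ∈ Finset.range s, Finsupp.single (enum B c, j) c := by
  simp only [columnVar, Finset.sum_range]
  rw [Equiv.sum_comp (colIndex s B.card)
    (fun x => Finsupp.single (enum B x.2, (x.1 : ℕ)) (x.2 : ℕ)), Fintype.sum_prod_type_right]

lemma sum_rowIndex_snd (s t : ℕ) :
    ∑ ρ, ((rowIndex s t ρ).2 : ℕ) = s * t * (t - 1) / 2 := by
  calc
    ∑ ρ, ((rowIndex s t ρ).2 : ℕ) = ∑ x : Fin s × Fin t, (x.2 : ℕ) :=
      Equiv.sum_comp (rowIndex s t) fun x => (x.2 : ℕ)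
    _ = s * ∑ z : Fin t, (z : ℕ) := by simp only [Fintype.sum_prod_type, Fin.sum_const, smul_eq_mul]
    _ = s * (t * (t - 1) / 2) := by rw [← Finset.sum_range fun z => z, Finset.sum_range_id]
    _ = s * t * (t - 1) / 2 := by
      rw [mul_assoc, Nat.mul_div_assoc _ (Nat.even_mul_pred_self t).two_dvd]

section KernelMatrix

variable (F : Type*) [Field F] (s : ℕ) (B : Finset ℕ)

lemma KentPoly_eq_monomial (b z : ℕ) (i j : Fin s) :
    KentPoly F b i j z = monomial (Finsupp.single (b, (j : ℕ)) z) (kernelCoeff F s b i j) := by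
  simp only [KentPoly, kernelCoeff, of_apply, Fin.ext_iff]
  split_ifs <;> simp_all [X_pow_eq_monomial]

lemma KpolyB_eq_of_monomial :
    KpolyB F s B = of fun ρ κ =>
      monomial (Finsupp.single (columnVar s B κ) ((rowIndex s B.card ρ).2 : ℕ))
        (kernelCoeff F s (enum B (colIndex s B.card κ).2)
          (rowIndex s B.card ρ).1 (colIndex s B.card κ).1) := by
  ext1 ρ κ
  exact KentPoly_eq_monomial F s (enum B (colIndex s B.card κ).2) (rowIndex s B.card ρ).2
    (rowIndex s B.card ρ).1 (colIndex s B.card κ).1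

theorem isHomogeneous_det_KpolyB :
    (KpolyB F s B).det.IsHomogeneous (s * B.card * (B.card - 1) / 2) := by
  rw [← sum_rowIndex_snd, KpolyB_eq_of_monomial]
  exact isHomogeneous_det_of_rows fun _ _ =>
    isHomogeneous_monomial _ (Finsupp.degree_single _ _)

theorem coeff_det_KpolyB :
    coeff (∑ c ∈ Finset.range B.card, ∑ j ∈ Finset.range s, Finsupp.single (enum B c, j) c)
        (KpolyB F s B).det =
      Equiv.Perm.sign ((colIndex s B.card).symm.trans (rowIndex s B.card)) := by
  have hblocks : (of fun ρ κ =>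
      if ((rowIndex s B.card ρ).2 : ℕ) = (colIndex s B.card κ).2 then
        kernelCoeff F s (enum B (colIndex s B.card κ).2)
          (rowIndex s B.card ρ).1 (colIndex s B.card κ).1 else 0) =
      (blockDiagonal fun c : Fin B.card => kernelCoeff F s (enum B c)).reindex
        (rowIndex s B.card).symm (colIndex s B.card).symm := by
    ext ρ κ
    simp only [of_apply, reindex_apply, Equiv.symm_symm, submatrix_apply, blockDiagonal_apply,
      Fin.val_inj]
    grind
  rw [← sum_columnVar, KpolyB_eq_of_monomial, coeff_det_monomial_single (columnVar_injective s B),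
    hblocks, det_reindex, det_blockDiagonal]
  simp only [det_kernelCoeff, Finset.prod_const_one, mul_one, Equiv.symm_symm]

end KernelMatrix

theorem statement11_general (F : Type*) [Field F] (s : ℕ) (B : Finset ℕ) :
    ((KpolyB F s B).det).IsHomogeneous (s * B.card * (B.card - 1) / 2) ∧
    ∃ ε : ℤˣ, MvPolynomial.coeff
      (∑ c ∈ Finset.range B.card, ∑ j ∈ Finset.range s, Finsupp.single (enum B c, j) c)
      ((KpolyB F s B).det) = ((ε : ℤ) : F) :=
  ⟨isHomogeneous_det_KpolyB F s B, _, coeff_det_KpolyB F s B⟩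

/-- `det(K_B)` is a homogeneous polynomial of total degree
`s·t·(t−1)/2`, the coefficient of the monomial `Π_{c=1}^{t} Π_{j=0}^{s−1} x_{b_c,j}^{c−1}`
in it is nonzero, and in particular `det(K_B) ≠ 0`. -/
theorem statement11 (F : Type*) [Field F] (s t : ℕ) (hs : 1 ≤ s) (ht₁ : 1 ≤ t) (hts : t ≤ s)
    (B : Finset ℕ) (hBsub : B ⊆ Finset.range s) (hcard : B.card = t) :
    ((KpolyB F s B).det).IsHomogeneous (s * t * (t - 1) / 2) ∧
    MvPolynomial.coeff
      (∑ c ∈ Finset.range t, ∑ j ∈ Finset.range s, Finsupp.single (enum B c, j) c)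
      ((KpolyB F s B).det) ≠ 0 ∧
    (KpolyB F s B).det ≠ 0 := by
  subst hcard
  obtain ⟨hdegree, ε, hcoeff⟩ := statement11_general F s B
  have hne := hcoeff.trans_ne (ε.isUnit.map (Int.castRingHom F)).ne_zero
  exact ⟨hdegree, hne, ne_zero_iff.mpr ⟨_, hne⟩⟩
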